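/- arXiv:1510.04419 — 3 statements merged into one kernel-verified Lean document; each statement's English description precedes it below -/
import Mathlib

section
/- Let i ≥ 1 and j ≥ 2 be integers and let r_i, r_j be independent random variables with r_i ∼ χ_{2i} and r_j ∼ χ_{2j}. Then E[ln((r_i + r_j)/r_j)] ≤ √(i/(j−1)); explicitly, ∫_0^∞ ∫_0^∞ ln((√x + √y)/√y) · ρ_i(x) ρ_j(y) dx dy ≤ √(i/(j−1)). -/
open MeasureTheory Finset

/-- Density of the chi-squared distribution with `2m` degrees of freedom:
`ρ_m(q) = q^{m−1} e^{−q/2} / (2^m (m−1)!)` on `(0,∞)`. A random variable `r`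
is χ_{2m}-distributed iff `r ≥ 0` and `r²` has this density; below `r = √x`
with `x ∼ χ²_{2m}`. -/
noncomputable def chi2Density (m : ℕ) (q : ℝ) : ℝ :=
  q ^ (m - 1) * Real.exp (-q / 2) / (2 ^ m * Nat.factorial (m - 1))


theorem mom (k : ℕ) : ∫ q in Set.Ioi (0:ℝ), q ^ k * Real.exp (-q / 2) = 2 ^ (k+1) * (k.factorial : ℝ) := by
  have h := Real.integral_rpow_mul_exp_neg_mul_Ioi (a := (k:ℝ)+1) (r := 1/2) (by positivity) (by norm_num)
  rw [Real.Gamma_nat_eq_factorial] at h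
  have h2 : ((1:ℝ) / (1/2)) ^ ((k:ℝ)+1) = 2 ^ (k+1) := by
    rw [show ((k:ℝ)+1) = ((k+1 : ℕ) : ℝ) by push_cast; ring, Real.rpow_natCast]; norm_num
  rw [h2] at h
  rw [← h]
  refine setIntegral_congr_fun measurableSet_Ioi ?_
  intro q _
  simp only [add_sub_cancel_right, Real.rpow_natCast]
  congr 2; ring

theorem momInt (k : ℕ) : Integrable (fun q : ℝ => q ^ k * Real.exp (-q / 2)) (volume.restrict (Set.Ioi (0:ℝ))) := by
  by_contra h
  have h1 := mom k
  rw [integral_undef h] at h1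
  have : (0:ℝ) < 2 ^ (k+1) * (k.factorial : ℝ) := by positivity
  linarith

theorem dens_nonneg (m : ℕ) {q : ℝ} (hq : 0 < q) : 0 ≤ chi2Density m q := by
  unfold chi2Density; positivity

theorem dens_int (m : ℕ) : Integrable (chi2Density m) (volume.restrict (Set.Ioi (0:ℝ))) :=
  (momInt (m-1)).div_const _

theorem dens_one (m : ℕ) (hm : 1 ≤ m) : ∫ q in Set.Ioi (0:ℝ), chi2Density m q = 1 := by
  unfold chi2Density
  rw [integral_div, mom, Nat.sub_add_cancel hm, div_self (by positivity)]

theorem dens_mul (n : ℕ) : (fun q => q * chi2Density (n+1) q) =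
    fun q => q ^ (n+1) * Real.exp (-q / 2) / (2 ^ (n+1) * Nat.factorial n) := by
  funext q; simp only [chi2Density, Nat.add_sub_cancel]; ring

theorem dens_mul_int (n : ℕ) : Integrable (fun q => q * chi2Density (n+1) q) (volume.restrict (Set.Ioi (0:ℝ))) := by
  rw [dens_mul]; exact (momInt (n+1)).div_const _

theorem dens_mul_val (n : ℕ) : ∫ q in Set.Ioi (0:ℝ), q * chi2Density (n+1) q = 2 * ((n:ℝ)+1) := by
  rw [dens_mul, integral_div, mom, Nat.factorial_succ]
  have : (n.factorial : ℝ) ≠ 0 := by positivity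
  push_cast; field_simp; ring

theorem dens_div (n : ℕ) {q : ℝ} (hq : 0 < q) : chi2Density (n+2) q / q =
    q ^ n * Real.exp (-q / 2) / (2 ^ (n+2) * Nat.factorial (n+1)) := by
  simp only [chi2Density, show n + 2 - 1 = n + 1 by omega]; field_simp; ring

theorem dens_div_int (n : ℕ) : Integrable (fun q => chi2Density (n+2) q / q) (volume.restrict (Set.Ioi (0:ℝ))) := by
  refine ((momInt n).div_const (2 ^ (n+2) * (Nat.factorial (n+1) : ℝ))).congr ?_
  filter_upwards [ae_restrict_mem measurableSet_Ioi] with q hq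
  exact (dens_div n hq).symm

theorem dens_div_val (n : ℕ) : ∫ q in Set.Ioi (0:ℝ), chi2Density (n+2) q / q = 1 / (2 * ((n:ℝ)+1)) := by
  rw [setIntegral_congr_fun measurableSet_Ioi (fun q hq => dens_div n hq), integral_div, mom, Nat.factorial_succ]
  have : (n.factorial : ℝ) ≠ 0 := by positivity
  push_cast; field_simp; ring

theorem log_bd {x y c : ℝ} (hx : 0 < x) (hy : 0 < y) (hc : 0 < c) :
    Real.log ((Real.sqrt x + Real.sqrt y) / Real.sqrt y) ≤ (1/(2*c)) * (x / y) + c/2 := by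
  have hsx := Real.sqrt_pos.2 hx
  have hsy := Real.sqrt_pos.2 hy
  have h1 := Real.log_le_sub_one_of_pos (x := (Real.sqrt x + Real.sqrt y) / Real.sqrt y) (by positivity)
  have e1 : (Real.sqrt x + Real.sqrt y) / Real.sqrt y - 1 = Real.sqrt x / Real.sqrt y := by
    field_simp; ring
  have e2 : x / y = (Real.sqrt x / Real.sqrt y)^2 := by
    rw [div_pow, Real.sq_sqrt hx.le, Real.sq_sqrt hy.le]
  rw [e1] at h1
  rw [e2]
  set s := Real.sqrt x / Real.sqrt y
  have e3 : (1/(2*c)) * s^2 + c/2 - s = (s - c)^2 / (2*c) := by field_simp; ring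
  have : 0 ≤ (s - c)^2 / (2*c) := by positivity
  linarith

theorem expectation_log_sum_ratio_le (i j : ℕ) (hi : 1 ≤ i) (hj : 2 ≤ j) :
    (∫ x in Set.Ioi (0 : ℝ), ∫ y in Set.Ioi (0 : ℝ),
        Real.log ((Real.sqrt x + Real.sqrt y) / Real.sqrt y) *
          (chi2Density i x * chi2Density j y)) ≤
      Real.sqrt ((i : ℝ) / ((j : ℝ) - 1)) := by
  obtain ⟨a, rfl⟩ : ∃ a, i = a + 1 := ⟨i - 1, by omega⟩
  obtain ⟨b, rfl⟩ : ∃ b, j = b + 2 := ⟨j - 2, by omega⟩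
  have hcast : (((a+1 : ℕ) : ℝ) / (((b+2 : ℕ) : ℝ) - 1)) = ((a:ℝ)+1) / ((b:ℝ)+1) := by
    push_cast; congr 1; ring
  rw [hcast]
  set c := Real.sqrt (((a:ℝ)+1) / ((b:ℝ)+1)) with hcdef
  have hc : 0 < c := Real.sqrt_pos.2 (by positivity)
  have hc2 : c^2 = ((a:ℝ)+1) / ((b:ℝ)+1) := Real.sq_sqrt (by positivity)
  have hlog : ∀ x y : ℝ, 0 < x → 0 < y →
      0 ≤ Real.log ((Real.sqrt x + Real.sqrt y) / Real.sqrt y) := by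
    intro x y hx hy
    have hsx := Real.sqrt_pos.2 hx
    have hsy := Real.sqrt_pos.2 hy
    apply Real.log_nonneg
    rw [le_div_iff₀ hsy]; linarith
  have hinner : ∀ x : ℝ, 0 < x → (∫ y in Set.Ioi (0 : ℝ),
        Real.log ((Real.sqrt x + Real.sqrt y) / Real.sqrt y) *
          (chi2Density (a+1) x * chi2Density (b+2) y)) ≤
      (1/(2*c)) * (1 / (2 * ((b:ℝ)+1))) * (x * chi2Density (a+1) x) + c/2 * chi2Density (a+1) x := by
    intro x hx
    have hI1 := (dens_div_int b).const_mul ((1/(2*c)) * (x * chi2Density (a+1) x))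
    have hI2 := (dens_int (b+2)).const_mul (c/2 * chi2Density (a+1) x)
    have := integral_mono_of_nonneg (μ := volume.restrict (Set.Ioi (0:ℝ)))
      (f := fun y => Real.log ((Real.sqrt x + Real.sqrt y) / Real.sqrt y) *
          (chi2Density (a+1) x * chi2Density (b+2) y))
      (g := fun y => (1/(2*c)) * (x * chi2Density (a+1) x) * (chi2Density (b+2) y / y) +
        c/2 * chi2Density (a+1) x * chi2Density (b+2) y) ?_ (hI1.add hI2) ?_
    · refine this.trans (le_of_eq ?_)
      rw [integral_add hI1 hI2, integral_const_mul, integral_const_mul, dens_div_val, dens_one _ (by omega)]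
      ring
    · filter_upwards [ae_restrict_mem measurableSet_Ioi] with y hy
      exact mul_nonneg (hlog x y hx hy) (mul_nonneg (dens_nonneg _ hx) (dens_nonneg _ hy))
    · filter_upwards [ae_restrict_mem measurableSet_Ioi] with y hy
      refine (mul_le_mul_of_nonneg_right (log_bd hx hy hc)
        (mul_nonneg (dens_nonneg _ hx) (dens_nonneg _ hy))).trans (le_of_eq ?_)
      ring
  have hJ1 := (dens_mul_int a).const_mul ((1/(2*c)) * (1 / (2 * ((b:ℝ)+1))))
  have hJ2 := (dens_int (a+1)).const_mul (c/2)
  refine (integral_mono_of_nonneg ?_ (hJ1.add hJ2) ?_).trans (le_of_eq ?_)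
  · filter_upwards [ae_restrict_mem measurableSet_Ioi] with x hx
    refine setIntegral_nonneg measurableSet_Ioi ?_
    intro y hy
    exact mul_nonneg (hlog x y hx hy) (mul_nonneg (dens_nonneg _ hx) (dens_nonneg _ hy))
  · filter_upwards [ae_restrict_mem measurableSet_Ioi] with x hx
    exact hinner x hx
  · simp only [Pi.add_apply]
    rw [integral_add hJ1 hJ2, integral_const_mul, integral_const_mul, dens_mul_val, dens_one _ (by omega)]
    have hb : ((b:ℝ)+1) ≠ 0 := by positivity
    have : (a:ℝ)+1 = c^2 * ((b:ℝ)+1) := by rw [hc2]; field_simp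
    rw [this]; field_simp; ring
end

section
/- Let i ≥ 1 and j ≥ 2 be integers and let r_i, r_j be independent random variables with r_i ∼ χ_{2i} and r_j ∼ χ_{2j}. Then E[r_i/r_j] ≤ √(i/(j−1)); explicitly, ∫_0^∞ ∫_0^∞ √(x/y) · ρ_i(x) ρ_j(y) dx dy ≤ √(i/(j−1)). -/
open MeasureTheory Finset

theorem chi2_moment (m : ℕ) (hm : 1 ≤ m) (s : ℝ) (hs : 0 < m + s) :
    ∫ x in Set.Ioi (0 : ℝ), x ^ s * chi2Density m x = 2 ^ s * Real.Gamma (m + s) / Real.Gamma m := by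
  have h := Real.integral_rpow_mul_exp_neg_mul_Ioi hs (r := 1 / 2) (by norm_num)
  obtain ⟨k, rfl⟩ : ∃ k, m = k + 1 := ⟨m - 1, by omega⟩
  have e : ∀ x ∈ Set.Ioi (0 : ℝ), x ^ s * chi2Density (k + 1) x =
      (1 / (2 ^ (k + 1) * Nat.factorial k)) *
        (x ^ (((k + 1 : ℕ) : ℝ) + s - 1) * Real.exp (-(1 / 2 * x))) := by
    intro x hx
    have hx : 0 < x := hx
    have e1 : ((k + 1 : ℕ) : ℝ) + s - 1 = s + (k : ℕ) := by push_cast; ring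
    rw [e1, Real.rpow_add hx, Real.rpow_natCast]
    have e2 : -(1 / 2 * x) = -x / 2 := by ring
    rw [e2]
    simp only [chi2Density, Nat.add_sub_cancel]
    ring
  rw [setIntegral_congr_fun measurableSet_Ioi e, integral_const_mul, h]
  have e3 : Real.Gamma ((k + 1 : ℕ) : ℝ) = Nat.factorial k := by
    push_cast; exact Real.Gamma_nat_eq_factorial k
  rw [e3, one_div_one_div, Real.rpow_add (by norm_num), Real.rpow_natCast]
  field_simp

theorem Gamma_half_le (a : ℝ) (ha : 0 < a) :
    Real.Gamma (a + 1 / 2) ≤ Real.sqrt a * Real.Gamma a := by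
  have h := Real.Gamma_mul_add_mul_le_rpow_Gamma_mul_rpow_Gamma ha
    (show 0 < a + 1 by linarith) (a := 1 / 2) (b := 1 / 2) (by norm_num) (by norm_num) (by norm_num)
  have g := Real.Gamma_pos_of_pos ha
  rw [Real.Gamma_add_one ha.ne', ← Real.sqrt_eq_rpow, ← Real.sqrt_eq_rpow,
    Real.sqrt_mul ha.le] at h
  have e : 1 / 2 * a + 1 / 2 * (a + 1) = a + 1 / 2 := by ring
  rw [e] at h
  calc _ ≤ _ := h
    _ = Real.sqrt a * (Real.sqrt (Real.Gamma a) * Real.sqrt (Real.Gamma a)) := by ring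
    _ = _ := by rw [Real.mul_self_sqrt g.le]

theorem expectation_ratio_chi_le (i j : ℕ) (hi : 1 ≤ i) (hj : 2 ≤ j) :
    (∫ x in Set.Ioi (0 : ℝ), ∫ y in Set.Ioi (0 : ℝ),
        Real.sqrt (x / y) * (chi2Density i x * chi2Density j y)) ≤
      Real.sqrt ((i : ℝ) / ((j : ℝ) - 1)) := by
  have hi' : (1 : ℝ) ≤ i := by exact_mod_cast hi
  have hj' : (2 : ℝ) ≤ j := by exact_mod_cast hj
  have inner : ∀ x ∈ Set.Ioi (0 : ℝ), (∫ y in Set.Ioi (0 : ℝ),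
        Real.sqrt (x / y) * (chi2Density i x * chi2Density j y)) =
      x ^ (1 / 2 : ℝ) * chi2Density i x *
        ∫ y in Set.Ioi (0 : ℝ), y ^ (-(1 / 2) : ℝ) * chi2Density j y := by
    intro x hx
    have hx : 0 < x := hx
    rw [← integral_const_mul]
    refine setIntegral_congr_fun measurableSet_Ioi fun y hy => ?_
    have hy : 0 < y := hy
    rw [Real.sqrt_div hx.le, Real.rpow_neg hy.le, ← Real.sqrt_eq_rpow, ← Real.sqrt_eq_rpow]
    ring
  rw [setIntegral_congr_fun measurableSet_Ioi inner, integral_mul_const,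
    chi2_moment i hi _ (by linarith), chi2_moment j (by omega) _ (by linarith)]
  have h1 := Gamma_half_le i (by linarith)
  have hb : 0 < (j : ℝ) - 1 := by linarith
  have h2 := Gamma_half_le _ hb
  have h3 := Real.Gamma_add_one hb.ne'
  rw [sub_add_cancel] at h3
  have e : (j : ℝ) - 1 + 1 / 2 = j + -(1 / 2) := by ring
  rw [e] at h2
  have gi := Real.Gamma_pos_of_pos (show (0 : ℝ) < i by linarith)
  have gj := Real.Gamma_pos_of_pos hb
  have gj2 := Real.Gamma_pos_of_pos (show (0 : ℝ) < j + -(1 / 2) by linarith)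
  rw [Real.sqrt_div (by linarith), h3, Real.rpow_neg (by norm_num)]
  have hp : (0 : ℝ) < 2 ^ (1 / 2 : ℝ) := by positivity
  have b1 : Real.Gamma (i + 1 / 2) / Real.Gamma i ≤ Real.sqrt i := by
    rwa [div_le_iff₀ gi]
  have sj := Real.sqrt_pos.mpr hb
  have b2 : Real.Gamma (j + -(1 / 2)) / (((j : ℝ) - 1) * Real.Gamma ((j : ℝ) - 1))
      ≤ 1 / Real.sqrt ((j : ℝ) - 1) := by
    rw [div_le_div_iff₀ (by positivity) sj]
    nlinarith [Real.mul_self_sqrt hb.le]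
  calc _ = (Real.Gamma (i + 1 / 2) / Real.Gamma i) *
        (Real.Gamma (j + -(1 / 2)) / (((j : ℝ) - 1) * Real.Gamma ((j : ℝ) - 1))) := by
        generalize (2 : ℝ) ^ (1 / 2 : ℝ) = p at hp
        field_simp
    _ ≤ Real.sqrt i * (1 / Real.sqrt ((j : ℝ) - 1)) :=
        mul_le_mul b1 b2 (by positivity) (by positivity)
    _ = _ := by ring
end

section
/- Let i ≥ 2 and j ≥ 1 be integers. Let X, Y be independent random variables with X ∼ χ²_{2i} and Y ∼ χ²_{2j}, and let X', Y' be independent with X' ∼ χ²_4 and Y' ∼ χ²_{2j}. Then E[ln(XY/(X+Y))] ≥ E[ln(X'Y'/(X'+Y'))]; explicitly, ∫_0^∞ ∫_0^∞ ln(xy/(x+y)) ρ_i(x) ρ_j(y) dx dy ≥ ∫_0^∞ ∫_0^∞ ln(xy/(x+y)) ρ_2(x) ρ_j(y) dx dy. -/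
open MeasureTheory Finset

lemma chi2_meas (m : ℕ) : Measurable (chi2Density m) := by
  unfold chi2Density; fun_prop

lemma chi2_nonneg (m : ℕ) {x : ℝ} (hx : 0 < x) : 0 ≤ chi2Density m x := by
  unfold chi2Density; positivity

lemma chi2_integrable (m : ℕ) (hm : 1 ≤ m) (p : ℝ) (hp : -1 < p) :
    IntegrableOn (fun x => x ^ p * chi2Density m x) (Set.Ioi 0) := by
  have hm' : (1 : ℝ) ≤ m := by exact_mod_cast hm
  have h := integrableOn_rpow_mul_exp_neg_mul_rpow (s := (m : ℝ) - 1 + p) (p := 1) (b := 1 / 2)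
    (by linarith) (by norm_num) (by norm_num)
  have h2 := h.const_mul (1 / (2 ^ m * (Nat.factorial (m - 1) : ℝ)))
  refine (integrableOn_congr_fun ?_ measurableSet_Ioi).mp h2
  intro x hx
  have hx : 0 < x := hx
  have e1 : x ^ ((m : ℝ) - 1 + p) = x ^ (m - 1) * x ^ p := by
    rw [Real.rpow_add hx, ← Real.rpow_natCast x (m - 1), Nat.cast_sub hm, Nat.cast_one]
  have e2 : -(1 / 2) * x ^ (1 : ℝ) = -x / 2 := by rw [Real.rpow_one]; ring
  simp only [chi2Density, e1, e2]
  ring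

lemma chi2_integrable0 (m : ℕ) (hm : 1 ≤ m) : IntegrableOn (chi2Density m) (Set.Ioi 0) := by
  simpa using chi2_integrable m hm 0 (by norm_num)

lemma chi2_integral (m : ℕ) (hm : 1 ≤ m) : ∫ x in Set.Ioi (0 : ℝ), chi2Density m x = 1 := by
  have h := Real.integral_rpow_mul_exp_neg_mul_Ioi (a := (m : ℝ)) (r := 1 / 2)
    (by exact_mod_cast hm) (by norm_num)
  have e : ∀ x ∈ Set.Ioi (0 : ℝ), chi2Density m x =
      (x ^ ((m : ℝ) - 1) * Real.exp (-(1 / 2 * x))) / (2 ^ m * Nat.factorial (m - 1)) := by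
    intro x _
    have e1 : x ^ ((m : ℝ) - 1) = x ^ (m - 1) := by
      rw [← Real.rpow_natCast x (m - 1), Nat.cast_sub hm, Nat.cast_one]
    have e2 : -(1 / 2 * x) = -x / 2 := by ring
    rw [e1, e2, chi2Density]
  rw [setIntegral_congr_fun measurableSet_Ioi e, integral_div, h]
  obtain ⟨k, rfl⟩ : ∃ k, m = k + 1 := ⟨m - 1, by omega⟩
  rw [Real.rpow_natCast]
  push_cast
  rw [Real.Gamma_nat_eq_factorial]
  have := Nat.factorial_pos k
  try simp only [Nat.add_sub_cancel]
  rw [one_div_one_div]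
  exact div_self (by positivity)

lemma log_bound {x y : ℝ} (hx : 0 < x) (hy : 0 < y) :
    |Real.log (x * y / (x + y))| ≤ y + 2 * x ^ (-(1 / 2) : ℝ) + 2 * y ^ (-(1 / 2) : ℝ) := by
  have hx' : 0 < x ^ (-(1 / 2) : ℝ) := Real.rpow_pos_of_pos hx _
  have hy' : 0 < y ^ (-(1 / 2) : ℝ) := Real.rpow_pos_of_pos hy _
  have ht : 0 < x * y / (x + y) := by positivity
  have h1 : x * y / (x + y) ≤ y := by
    rw [div_le_iff₀ (by positivity)]; nlinarith
  have h2 := Real.log_le_sub_one_of_pos ht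
  rw [abs_le]
  constructor
  · have h3 : (x * y / (x + y)) ^ (-(1 / 2) : ℝ) ≤ x ^ (-(1 / 2) : ℝ) + y ^ (-(1 / 2) : ℝ) := by
      have e : x * y / (x + y) = (x⁻¹ + y⁻¹)⁻¹ := by field_simp; ring
      rw [e, Real.rpow_neg (by positivity), Real.rpow_neg hx.le, Real.rpow_neg hy.le,
        ← Real.inv_rpow (by positivity), inv_inv, ← Real.inv_rpow hx.le, ← Real.inv_rpow hy.le]
      exact Real.rpow_add_le_add_rpow (by positivity) (by positivity) (by norm_num) (by norm_num)
    have h4 := Real.log_le_sub_one_of_pos (Real.rpow_pos_of_pos ht (-(1 / 2) : ℝ))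
    rw [Real.log_rpow ht] at h4
    linarith
  · linarith

lemma inner_bound_eq (x y c : ℝ) : (y + 2 * x ^ (-(1 / 2) : ℝ) + 2 * y ^ (-(1 / 2) : ℝ)) * c =
    y ^ (1 : ℝ) * c + (2 * x ^ (-(1 / 2) : ℝ)) * c + 2 * (y ^ (-(1 / 2) : ℝ) * c) := by
  rw [Real.rpow_one]; ring

lemma bound_integrable (j : ℕ) (hj : 1 ≤ j) (x : ℝ) :
    IntegrableOn (fun y => (y + 2 * x ^ (-(1 / 2) : ℝ) + 2 * y ^ (-(1 / 2) : ℝ)) *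
      chi2Density j y) (Set.Ioi 0) := by
  simp only [inner_bound_eq]
  exact ((chi2_integrable j hj 1 (by norm_num)).add
    ((chi2_integrable0 j hj).const_mul _)).add
    ((chi2_integrable j hj (-(1 / 2)) (by norm_num)).const_mul 2)

lemma inner_integrable (j : ℕ) (hj : 1 ≤ j) {x : ℝ} (hx : 0 < x) :
    IntegrableOn (fun y => Real.log (x * y / (x + y)) * chi2Density j y) (Set.Ioi 0) := by
  refine Integrable.mono' (bound_integrable j hj x) ?_ ?_
  · have := chi2_meas j
    exact Measurable.aestronglyMeasurable (by fun_prop)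
  · refine (ae_restrict_iff' measurableSet_Ioi).mpr (Filter.Eventually.of_forall ?_)
    intro y hy
    rw [norm_mul, Real.norm_eq_abs, Real.norm_of_nonneg (chi2_nonneg j hy)]
    exact mul_le_mul_of_nonneg_right (log_bound hx hy) (chi2_nonneg j hy)

noncomputable def gfun (j : ℕ) (x : ℝ) : ℝ :=
  ∫ y in Set.Ioi (0 : ℝ), Real.log (x * y / (x + y)) * chi2Density j y

lemma gfun_mono (j : ℕ) (hj : 1 ≤ j) {x z : ℝ} (hx : 0 < x) (hxz : x ≤ z) :
    gfun j x ≤ gfun j z := by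
  have hz : 0 < z := hx.trans_le hxz
  refine setIntegral_mono_on (inner_integrable j hj hx) (inner_integrable j hj hz)
    measurableSet_Ioi ?_
  intro y hy
  have hy : 0 < y := hy
  refine mul_le_mul_of_nonneg_right (Real.log_le_log (by positivity) ?_) (chi2_nonneg j hy)
  rw [div_le_div_iff₀ (by positivity) (by positivity)]
  nlinarith [mul_le_mul_of_nonneg_right hxz (mul_pos hy hy).le]

lemma gfun_bound (j : ℕ) (hj : 1 ≤ j) : ∃ A B : ℝ, ∀ x, 0 < x →
    |gfun j x| ≤ A + B * x ^ (-(1 / 2) : ℝ) := by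
  refine ⟨(∫ y in Set.Ioi (0 : ℝ), y ^ (1 : ℝ) * chi2Density j y) +
    2 * ∫ y in Set.Ioi (0 : ℝ), y ^ (-(1 / 2) : ℝ) * chi2Density j y, 2, ?_⟩
  intro x hx
  have h : |gfun j x| ≤ ∫ y in Set.Ioi (0 : ℝ),
      (y + 2 * x ^ (-(1 / 2) : ℝ) + 2 * y ^ (-(1 / 2) : ℝ)) * chi2Density j y := by
    rw [gfun, ← Real.norm_eq_abs]
    refine norm_integral_le_of_norm_le (bound_integrable j hj x) ?_
    refine (ae_restrict_iff' measurableSet_Ioi).mpr (Filter.Eventually.of_forall ?_)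
    intro y hy
    rw [norm_mul, Real.norm_eq_abs, Real.norm_of_nonneg (chi2_nonneg j hy)]
    exact mul_le_mul_of_nonneg_right (log_bound hx hy) (chi2_nonneg j hy)
  refine h.trans (le_of_eq ?_)
  have i1 := chi2_integrable j hj 1 (by norm_num)
  have i2 := (chi2_integrable0 j hj).const_mul (2 * x ^ (-(1 / 2) : ℝ))
  have i3 := (chi2_integrable j hj (-(1 / 2)) (by norm_num)).const_mul 2
  have i12 : Integrable (fun y => y ^ (1 : ℝ) * chi2Density j y +
      2 * x ^ (-(1 / 2) : ℝ) * chi2Density j y) (volume.restrict (Set.Ioi 0)) := i1.add i2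
  simp only [inner_bound_eq]
  rw [integral_add i12 i3, integral_add i1 i2, integral_const_mul, integral_const_mul,
    chi2_integral j hj]
  ring

lemma gfun_meas (j : ℕ) : StronglyMeasurable (gfun j) := by
  have := chi2_meas j
  have h : StronglyMeasurable (Function.uncurry
      (fun x y : ℝ => Real.log (x * y / (x + y)) * chi2Density j y)) := by
    apply Measurable.stronglyMeasurable
    unfold Function.uncurry
    fun_prop
  exact h.integral_prod_right

lemma outer_integrable (i j : ℕ) (hi : 1 ≤ i) (hj : 1 ≤ j) :
    IntegrableOn (fun x => gfun j x * chi2Density i x) (Set.Ioi 0) := by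
  obtain ⟨A, B, h⟩ := gfun_bound j hj
  have i1 := (chi2_integrable0 i hi).const_mul A
  have i2 := (chi2_integrable i hi (-(1 / 2)) (by norm_num)).const_mul B
  refine Integrable.mono' (i1.add i2) ?_ ?_
  · exact ((gfun_meas j).mul (chi2_meas i).stronglyMeasurable).aestronglyMeasurable
  · refine (ae_restrict_iff' measurableSet_Ioi).mpr (Filter.Eventually.of_forall ?_)
    intro x hx
    rw [norm_mul, Real.norm_eq_abs, Real.norm_of_nonneg (chi2_nonneg i hx)]
    refine (mul_le_mul_of_nonneg_right (h x hx) (chi2_nonneg i hx)).trans (le_of_eq ?_)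
    simp only [Pi.add_apply]
    ring

lemma chi2_succ (i : ℕ) (hi : 1 ≤ i) (x : ℝ) :
    chi2Density (i + 1) x = x / (2 * i) * chi2Density i x := by
  obtain ⟨k, rfl⟩ : ∃ k, i = k + 1 := ⟨i - 1, by omega⟩
  have := Nat.factorial_pos k
  simp only [chi2Density, Nat.add_sub_cancel, Nat.factorial_succ]
  push_cast
  field_simp
  try ring

lemma step (i j : ℕ) (hi : 1 ≤ i) (hj : 1 ≤ j) :
    ∫ x in Set.Ioi (0 : ℝ), gfun j x * chi2Density i x ≤
    ∫ x in Set.Ioi (0 : ℝ), gfun j x * chi2Density (i + 1) x := by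
  have hi0 : (0 : ℝ) < 2 * i := by have : (0 : ℝ) < i := by exact_mod_cast hi
                                   linarith
  set c := gfun j (2 * i) with hc
  have a1 := outer_integrable i j hi hj
  have a2 := outer_integrable (i + 1) j (by omega) hj
  have b1 := (chi2_integrable0 i hi).const_mul c
  have b2 := (chi2_integrable0 (i + 1) (by omega)).const_mul c
  have key : ∫ x in Set.Ioi (0 : ℝ), (gfun j x * chi2Density i x + c * chi2Density (i + 1) x) ≤
      ∫ x in Set.Ioi (0 : ℝ), (gfun j x * chi2Density (i + 1) x + c * chi2Density i x) := by
    refine setIntegral_mono_on (a1.add b2) (a2.add b1) measurableSet_Ioi ?_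
    intro x hx
    have hx : 0 < x := hx
    have hn := chi2_nonneg i hx
    rw [chi2_succ i hi]
    have : 0 ≤ (gfun j x - c) * (x / (2 * i) - 1) := by
      rcases le_total x (2 * i) with h | h
      · have h1 := gfun_mono j hj hx h
        have h2 : x / (2 * i) ≤ 1 := (div_le_one hi0).mpr h
        exact mul_nonneg_of_nonpos_of_nonpos (by linarith) (by linarith)
      · have h1 := gfun_mono j hj hi0 h
        have h2 : 1 ≤ x / (2 * i) := (one_le_div hi0).mpr h
        exact mul_nonneg (by linarith) (by linarith)
    nlinarith [mul_nonneg this hn]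
  rw [integral_add a1 b2, integral_add a2 b1, integral_const_mul, integral_const_mul,
    chi2_integral i hi, chi2_integral (i + 1) (by omega)] at key
  linarith

theorem expectation_log_harmonicmean_monotone (i j : ℕ) (hi : 2 ≤ i) (hj : 1 ≤ j) :
    (∫ x in Set.Ioi (0 : ℝ), ∫ y in Set.Ioi (0 : ℝ),
        Real.log (x * y / (x + y)) * (chi2Density i x * chi2Density j y)) ≥
    (∫ x in Set.Ioi (0 : ℝ), ∫ y in Set.Ioi (0 : ℝ),
        Real.log (x * y / (x + y)) * (chi2Density 2 x * chi2Density j y)) := by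
  have e : ∀ (m : ℕ) (x : ℝ), (∫ y in Set.Ioi (0 : ℝ),
      Real.log (x * y / (x + y)) * (chi2Density m x * chi2Density j y)) =
      gfun j x * chi2Density m x := by
    intro m x
    rw [gfun, ← integral_mul_const]
    congr 1
    funext y
    ring
  simp only [e, ge_iff_le]
  induction i, hi using Nat.le_induction with
  | base => exact le_refl _
  | succ n hn ih => exact ih.trans (step n j (by omega) hj)
end
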